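/- arXiv:math/0601238 — 3 statements merged into one kernel-verified Lean document; each statement's English description precedes it below -/
import Mathlib

section
/- Let K be a field of characteristic zero and let A be an n×n matrix over K. Then in the formal power series ring K[[t]] one has the identity det(1 − t·A) · exp(∑_{m≥1} tr(A^m) t^m / m) = 1; equivalently, ∑_{m≥1} tr(A^m) t^m / m = − log det(1 − t·A). -/
/-- The formal exponential of a power series (with zero constant term),
defined coefficientwise: the `k`-th coefficient of `formalExp K f` is
`∑_{n ≤ k} coeff k (f ^ n) / n!`.  For `f` with zero constant term this is
exactly `exp f = ∑_{n ≥ 0} f ^ n / n!`, since `coeff k (f ^ n) = 0` for `n > k`. -/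
noncomputable def formalExp (K : Type*) [Field K] (f : PowerSeries K) : PowerSeries K :=
  PowerSeries.mk fun k =>
    ∑ n ∈ Finset.range (k + 1), (PowerSeries.coeff k (f ^ n)) / (n.factorial : K)

/-!
Put `P = det (1 - t A)`. The matrix `∑ Aᵏ tᵏ` is inverse to `1 - t A`, so Jacobi's formula for the
derivative of a determinant reads `P' = -P ∑ tr(Aᵏ⁺¹) tᵏ = -P f'`, where `f = ∑ tr(Aᵐ) tᵐ / m`.
Hence `P exp f` has derivative zero, and its constant term is `1`.
-/

section Derivation

variable {R A ι : Type*}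

theorem derivation_prod_finset [CommSemiring R] [CommSemiring A] [Algebra R A] {M : Type*}
    [AddCommMonoid M] [Module A M] [Module R M] [DecidableEq ι] (D : Derivation R A M)
    (s : Finset ι) (f : ι → A) :
    D (∏ i ∈ s, f i) = ∑ i ∈ s, (∏ j ∈ s.erase i, f j) • D (f i) := by
  induction s using Finset.induction_on with
  | empty => simp
  | insert a s ha ih =>
    rw [Finset.prod_insert ha, D.leibniz, ih, Finset.smul_sum, Finset.sum_insert ha,
      Finset.erase_insert ha, add_comm]
    congr 1
    refine Finset.sum_congr rfl fun i hi ↦ ?_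
    have hai : a ≠ i := (ne_of_mem_of_not_mem hi ha).symm
    rw [Finset.erase_insert_of_ne hai,
      Finset.prod_insert fun h ↦ ha (Finset.mem_of_mem_erase h), mul_smul]

variable [CommRing A] [Fintype ι] [DecidableEq ι]

theorem trace_adjugate_mul (M N : Matrix ι ι A) :
    (M.adjugate * N).trace = ∑ i, (M.updateCol i (N.col i)).det := by
  refine Finset.sum_congr rfl fun i _ ↦ ?_
  rw [← Matrix.cramer_apply, Matrix.cramer_eq_adjugate_mulVec]
  rfl

variable [CommSemiring R] [Algebra R A]

theorem derivation_det_eq_sum_det_updateCol (D : Derivation R A A) (M : Matrix ι ι A) :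
    D M.det = ∑ i, (M.updateCol i ((M.map D).col i)).det := by
  simp only [Matrix.det_apply, map_sum, Units.smul_def, map_zsmul, derivation_prod_finset,
    Finset.smul_sum, smul_eq_mul]
  rw [Finset.sum_comm]
  refine Finset.sum_congr rfl fun i _ ↦ Finset.sum_congr rfl fun σ _ ↦ ?_
  rw [← Finset.prod_erase_mul _ _ (Finset.mem_univ i), Matrix.updateCol_self]
  congr 2
  refine Finset.prod_congr rfl fun j hj ↦ ?_
  rw [Matrix.updateCol_ne (Finset.ne_of_mem_erase hj)]

theorem derivation_det_eq_trace_adjugate_mul (D : Derivation R A A) (M : Matrix ι ι A) :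
    D M.det = (M.adjugate * M.map D).trace := by
  rw [derivation_det_eq_sum_det_updateCol, trace_adjugate_mul]

theorem derivation_det_of_mul_eq_one (D : Derivation R A A) {M N : Matrix ι ι A}
    (h : M * N = 1) : D M.det = M.det * (N * M.map D).trace := by
  have adjugate_eq : M.adjugate = M.det • N := by
    rw [← mul_one M.adjugate, ← h, ← mul_assoc, M.adjugate_mul, smul_mul_assoc, one_mul]
  rw [derivation_det_eq_trace_adjugate_mul, adjugate_eq, smul_mul_assoc, Matrix.trace_smul,
    smul_eq_mul]

end Derivation

section PowerSeries

open PowerSeries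

theorem constantCoeff_subst_eq_algebraMap {R S : Type*} [CommRing R] [CommRing S] [Algebra R S]
    {f : S⟦X⟧} (hf : constantCoeff f = 0) (g : R⟦X⟧) :
    constantCoeff (g.subst f) = algebraMap R S (constantCoeff g) := by
  rw [← coeff_zero_eq_constantCoeff_apply, coeff_subst' (.of_constantCoeff_zero' hf),
    finsum_eq_single _ 0 fun n hn ↦ by simp [hf, hn]]
  simp [Algebra.smul_def]

theorem mul_exp_subst_eq_one {R : Type*} [CommRing R] [Algebra ℚ R] {f g : R⟦X⟧}
    (hf : constantCoeff f = 0) (hg : constantCoeff g = 1) (hfg : d⁄dX R g = -(g * d⁄dX R f)) :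
    g * (exp R).subst f = 1 := by
  have hs : HasSubst f := .of_constantCoeff_zero' hf
  have := IsAddTorsionFree.of_module_rat R
  apply derivative.ext
  · rw [Derivation.leibniz, derivative_subst hs, derivative_exp, hfg, derivative_one]
    simp only [smul_eq_mul]
    ring
  · rw [map_mul, hg, constantCoeff_subst_eq_algebraMap hf, constantCoeff_exp, map_one, one_mul,
      map_one]

theorem formalExp_eq_exp_subst {K : Type*} [Field K] [CharZero K] {f : K⟦X⟧}
    (hf : constantCoeff f = 0) : formalExp K f = (exp K).subst f := by
  have coeff_pow_eq_zero {k n : ℕ} (hkn : k < n) : coeff k (f ^ n) = 0 :=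
    coeff_of_lt_order k <|
      (Nat.cast_lt.mpr hkn).trans_le (le_order_pow_of_constantCoeff_eq_zero n hf)
  ext k
  rw [coeff_subst' (.of_constantCoeff_zero' hf), formalExp, coeff_mk,
    finsum_eq_sum_of_support_subset (s := Finset.range (k + 1))]
  · simp [div_eq_inv_mul]
  · refine Function.support_subset_iff'.mpr fun n hn ↦ ?_
    have hkn : k < n := by simpa [Nat.lt_succ_iff] using hn
    rw [coeff_pow_eq_zero hkn, smul_zero]

variable {R ι : Type*} [Fintype ι] [DecidableEq ι]

/-- The power series `∑ Aᵏ tᵏ` in a matrix `A`, as a matrix of power series; it is the inverse of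
`1 - t A`. -/
noncomputable def matrixGeomSeries [Semiring R] (A : Matrix ι ι R) : Matrix ι ι R⟦X⟧ :=
  .of fun i j ↦ mk fun k ↦ (A ^ k) i j

theorem map_C_mul_matrixGeomSeries_apply [Semiring R] (A : Matrix ι ι R) (i j : ι) :
    (A.map C * matrixGeomSeries A) i j = mk fun k ↦ (A ^ (k + 1)) i j := by
  ext k
  simp [matrixGeomSeries, Matrix.mul_apply, pow_succ']

theorem one_sub_X_smul_mul_matrixGeomSeries [Ring R] (A : Matrix ι ι R) :
    (1 - (X : R⟦X⟧) • A.map C) * matrixGeomSeries A = 1 := by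
  rw [sub_mul, one_mul, smul_mul_assoc]
  ext i j k
  rw [Matrix.sub_apply, Matrix.smul_apply, map_C_mul_matrixGeomSeries_apply]
  cases k <;> by_cases h : i = j <;>
    simp [matrixGeomSeries, Matrix.one_apply, h, coeff_succ_X_mul, coeff_one]

variable [CommRing R]

theorem coe_charpolyRev (A : Matrix ι ι R) :
    (A.charpolyRev : R⟦X⟧) = (1 - (X : R⟦X⟧) • A.map C).det := by
  let φ : Polynomial R →+* R⟦X⟧ := Polynomial.coeToPowerSeries.ringHom
  change φ (Matrix.det _) = _
  rw [RingHom.map_det]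
  congr 1
  ext1 i j
  by_cases h : i = j <;> simp [h, φ, X_mul]

theorem derivative_charpolyRev (A : Matrix ι ι R) :
    d⁄dX R (A.charpolyRev : R⟦X⟧) = -(A.charpolyRev * mk fun k ↦ (A ^ (k + 1)).trace) := by
  have map_derivative : (1 - (X : R⟦X⟧) • A.map C).map (d⁄dX R) = -A.map C := by
    ext1 i j
    by_cases h : i = j <;> simp [h]
  have trace_eq : (A.map C * matrixGeomSeries A).trace = mk fun k ↦ (A ^ (k + 1)).trace := by
    ext k
    simp [Matrix.trace, map_C_mul_matrixGeomSeries_apply]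
  rw [coe_charpolyRev, derivation_det_of_mul_eq_one _ (one_sub_X_smul_mul_matrixGeomSeries A),
    map_derivative, mul_neg, Matrix.trace_neg, Matrix.trace_mul_comm, trace_eq, mul_neg]

variable [Algebra ℚ R]

/-- The power series `∑_{m ≥ 1} tr(Aᵐ) tᵐ / m`, that is, `-log det (1 - t A)`. -/
noncomputable def tracePowSeries (A : Matrix ι ι R) : R⟦X⟧ :=
  mk fun m ↦ if m = 0 then 0 else (m : ℚ)⁻¹ • (A ^ m).trace

theorem tracePowSeries_eq_mk_div {K : Type*} [Field K] [CharZero K] (A : Matrix ι ι K) :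
    tracePowSeries A = mk fun m ↦ if m = 0 then 0 else (A ^ m).trace / (m : K) := by
  simp only [tracePowSeries, Rat.smul_def, Rat.cast_inv, Rat.cast_natCast, div_eq_inv_mul]

theorem constantCoeff_tracePowSeries (A : Matrix ι ι R) :
    constantCoeff (tracePowSeries A) = 0 := by
  simp [← coeff_zero_eq_constantCoeff_apply, tracePowSeries]

theorem derivative_tracePowSeries (A : Matrix ι ι R) :
    d⁄dX R (tracePowSeries A) = mk fun k ↦ (A ^ (k + 1)).trace := by
  ext k
  have hk : ((k + 1 : ℕ) : ℚ) ≠ 0 := Nat.cast_ne_zero.mpr k.succ_ne_zero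
  rw [coeff_derivative, tracePowSeries, coeff_mk, coeff_mk, if_neg k.succ_ne_zero, ← Nat.cast_succ,
    mul_comm, ← nsmul_eq_mul, ← Nat.cast_smul_eq_nsmul ℚ, smul_inv_smul₀ hk]

theorem det_one_sub_smul_mul_exp_trace_pow_eq_one_general (A : Matrix ι ι R) :
    (A.charpolyRev : R⟦X⟧) * (exp R).subst (tracePowSeries A) = 1 := by
  have charpolyRev_zero : constantCoeff (A.charpolyRev : R⟦X⟧) = 1 := by
    rw [Polynomial.constantCoeff_coe, Polynomial.coeff_zero_eq_eval_zero, A.eval_charpolyRev]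
  apply mul_exp_subst_eq_one (constantCoeff_tracePowSeries A) charpolyRev_zero
  rw [derivative_charpolyRev, derivative_tracePowSeries]

end PowerSeries

/-- Let `K` be a field of characteristic zero and `A` an `n × n` matrix over `K`.
Then in `K[[t]]` one has `det(1 - t • A) * exp (∑_{m ≥ 1} tr(A^m) t^m / m) = 1`,
where `det(1 - t • A)` is computed in `K[t]` and regarded as a power series. -/
theorem det_one_sub_smul_mul_exp_trace_pow_eq_one
    (K : Type*) [Field K] [CharZero K] (n : ℕ) (A : Matrix (Fin n) (Fin n) K) :
    ((Matrix.det (1 - (Polynomial.X : Polynomial K) • A.map Polynomial.C) :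
        Polynomial K) : PowerSeries K) *
      formalExp K (PowerSeries.mk fun m =>
        if m = 0 then 0 else Matrix.trace (A ^ m) / (m : K)) = 1 := by
  rw [← tracePowSeries_eq_mk_div, formalExp_eq_exp_subst (constantCoeff_tracePowSeries A)]
  exact det_one_sub_smul_mul_exp_trace_pow_eq_one_general A
end

section
/- Let N ≥ 1 and k ≥ 1 be integers, let χ be a Dirichlet character modulo N with values in ℂ, and let b : ℕ → ℂ satisfy: (i) b(1) = 1; (ii) b(mn) = b(m)·b(n) whenever gcd(m,n) = 1; (iii) for every prime p and every r ≥ 1, b(p^r)·b(p) = b(p^{r+1}) + χ(p)·p^{k−1}·b(p^{r−1}). Let s ∈ ℂ be such that ∑_{n≥1} |b(n)·n^{−s}| converges. Then the Dirichlet series ∑_{n≥1} b(n) n^{−s} converges to the Euler product over all primes, ∑_{n≥1} b(n) n^{−s} = ∏_p (1 − b(p) p^{−s} + χ(p) p^{k−1−2s})^{−1}, and this product converges. -/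
/-!
Absolute convergence and multiplicativity factor the Dirichlet series as the product over the
primes of the local series `∑ b (p ^ r) * p ^ (-r * s)`. The Hecke relation at `p` is a linear
recurrence of order two for the terms of the local series, so multiplying its sum by
`1 - b p * p ^ (-s) + χ p * p ^ (k - 1 - 2 * s)` telescopes to the constant term `1`.
-/

theorem mul_tsum_of_linear_recurrence {R : Type*} [Ring R] [TopologicalSpace R]
    [IsTopologicalRing R] [T2Space R] {a : ℕ → R} {u c : R} (ha : Summable a)
    (hrec : ∀ r, a (r + 2) = u * a (r + 1) - c * a r) :
    (1 - u + c) * ∑' r, a r = a 0 + a 1 - u * a 0 := by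
  have ha' : Summable fun r ↦ a (r + 1) := (summable_nat_add_iff 1).2 ha
  have hsplit : ∑' r, a r = a 0 + ∑' r, a (r + 1) := ha.tsum_eq_zero_add
  have hshift : ∑' r, a (r + 1) = a 1 + (u * ∑' r, a (r + 1) - c * ∑' r, a r) := by
    rw [← ha'.tsum_mul_left, ← ha.tsum_mul_left,
      ← (ha'.mul_left u).tsum_sub (ha.mul_left c), ha'.tsum_eq_zero_add]
    simp only [hrec, zero_add]
  calc (1 - u + c) * ∑' r, a r
      = ∑' r, a r - u * ∑' r, a r + c * ∑' r, a r := by rw [add_mul, sub_mul, one_mul]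
    _ = a 0 + (∑' r, a (r + 1) - (u * ∑' r, a (r + 1) - c * ∑' r, a r)) - u * a 0 := by
      nth_rw 1 2 [hsplit]; noncomm_ring
    _ = a 0 + a 1 - u * a 0 := by rw [sub_eq_of_eq_add hshift]

theorem hasProd_inv_of_linear_recurrence {F : Type*} [NormedField F] [CompleteSpace F]
    {f c : ℕ → F} (hf0 : f 0 = 0) (hf1 : f 1 = 1)
    (hmul : ∀ {m n : ℕ}, m.Coprime n → f (m * n) = f m * f n)
    (hrec : ∀ p : ℕ, p.Prime → ∀ r, f (p ^ (r + 2)) = f p * f (p ^ (r + 1)) - c p * f (p ^ r))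
    (hsum : Summable (‖f ·‖)) :
    HasProd (fun p : Nat.Primes ↦ (1 - f p + c p)⁻¹) (∑' n, f n) := by
  have hlocal (p : Nat.Primes) : (1 - f p + c p)⁻¹ = ∑' r, f (p ^ r) := by
    have hp : Summable fun r ↦ f (p ^ r) :=
      hsum.of_norm.comp_injective (Nat.pow_right_injective p.2.two_le)
    refine inv_eq_of_mul_eq_one_right ?_
    rw [mul_tsum_of_linear_recurrence hp (hrec p p.2), pow_zero, pow_one, hf1, mul_one,
      add_sub_cancel_right]
  simpa only [hlocal] using EulerProduct.eulerProduct_hasProd hf1 hmul hsum hf0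

section LSeriesTerm

variable {f : ℕ → ℂ} {s : ℂ}

theorem lseries_term_succ (f : ℕ → ℂ) (s : ℂ) (n : ℕ) :
    LSeries.term f s (n + 1) = f (n + 1) * ((n : ℂ) + 1) ^ (-s) := by
  rw [LSeries.term_of_ne_zero n.succ_ne_zero, Complex.cpow_neg, div_eq_mul_inv, Nat.cast_succ]

theorem lseriesSummable_iff_summable_norm_succ :
    LSeriesSummable f s ↔ Summable fun n : ℕ ↦ ‖f (n + 1) * ((n : ℂ) + 1) ^ (-s)‖ := by
  simp only [← lseries_term_succ]
  rw [summable_norm_iff, summable_nat_add_iff 1, LSeriesSummable]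

theorem lseries_eq_tsum_succ (f : ℕ → ℂ) (s : ℂ) :
    LSeries f s = ∑' n : ℕ, f (n + 1) * ((n : ℂ) + 1) ^ (-s) := by
  have hsupport : Function.support (LSeries.term f s) ⊆ Set.range Nat.succ := by
    rintro (_ | n) hn
    · exact absurd (LSeries.term_zero f s) hn
    · exact Set.mem_range_self n
  simp only [← lseries_term_succ]
  exact (Nat.succ_injective.tsum_eq hsupport).symm

theorem lseries_term_mul_of_coprime
    (hf : ∀ m n : ℕ, m.Coprime n → f (m * n) = f m * f n) {m n : ℕ} (hmn : m.Coprime n) :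
    LSeries.term f s (m * n) = LSeries.term f s m * LSeries.term f s n := by
  rcases eq_or_ne m 0 with rfl | hm
  · simp only [zero_mul, LSeries.term_zero]
  rcases eq_or_ne n 0 with rfl | hn
  · simp only [mul_zero, LSeries.term_zero]
  rw [LSeries.term_of_ne_zero (mul_ne_zero hm hn), LSeries.term_of_ne_zero hm,
    LSeries.term_of_ne_zero hn, hf m n hmn, Nat.cast_mul, Complex.natCast_mul_natCast_cpow,
    mul_div_mul_comm]

theorem lseries_term_pow (f : ℕ → ℂ) (s : ℂ) {n : ℕ} (hn : n ≠ 0) (r : ℕ) :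
    LSeries.term f s (n ^ r) = f (n ^ r) * ((n : ℂ) ^ (-s)) ^ r := by
  rw [LSeries.term_of_ne_zero (pow_ne_zero r hn), Nat.cast_pow, Complex.cpow_neg, inv_pow,
    div_eq_mul_inv, ← Complex.natCast_cpow_natCast_mul, ← Complex.cpow_nat_mul]

end LSeriesTerm

theorem cpow_natCast_sub_one_sub {x : ℂ} (hx : x ≠ 0) {k : ℕ} (hk : 1 ≤ k) (z : ℂ) :
    x ^ ((k : ℂ) - 1 - z) = x ^ (k - 1) * x ^ (-z) := by
  rw [sub_eq_add_neg _ z, Complex.cpow_add _ _ hx, ← Nat.cast_pred hk, Complex.cpow_natCast]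

theorem dirichlet_series_euler_product_general {b c : ℕ → ℂ} {s : ℂ} (hb1 : b 1 = 1)
    (hbmul : ∀ m n : ℕ, m.Coprime n → b (m * n) = b m * b n)
    (hbrec : ∀ p : ℕ, p.Prime → ∀ r : ℕ,
      b (p ^ (r + 1)) * b p = b (p ^ (r + 2)) + c p * b (p ^ r))
    (hs : LSeriesSummable b s) :
    HasProd (fun p : Nat.Primes ↦
        (1 - b p * ((p : ℕ) : ℂ) ^ (-s) + c p * ((p : ℕ) : ℂ) ^ (-(2 * s)))⁻¹)
      (LSeries b s) := by
  have hterm1 : LSeries.term b s 1 = 1 := by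
    rw [LSeries.term_of_ne_zero one_ne_zero, hb1, Nat.cast_one, Complex.one_cpow, div_one]
  have hterm (p : Nat.Primes) : b p * ((p : ℕ) : ℂ) ^ (-s) = LSeries.term b s p := by
    simpa only [pow_one] using (lseries_term_pow b s p.2.ne_zero 1).symm
  have hsq (p : ℕ) : (p : ℂ) ^ (-(2 * s)) = ((p : ℂ) ^ (-s)) ^ 2 := by
    rw [← Complex.cpow_nat_mul, Nat.cast_ofNat, mul_neg]
  have hrec (p : ℕ) (hp : p.Prime) (r : ℕ) :
      LSeries.term b s (p ^ (r + 2)) = LSeries.term b s p * LSeries.term b s (p ^ (r + 1)) -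
        c p * (p : ℂ) ^ (-(2 * s)) * LSeries.term b s (p ^ r) := by
    rw [← hterm ⟨p, hp⟩, hsq]
    simp only [lseries_term_pow b s hp.ne_zero]
    linear_combination (-((p : ℂ) ^ (-s)) ^ (r + 2)) * hbrec p hp r
  simp only [hterm]
  exact hasProd_inv_of_linear_recurrence (c := fun p ↦ c p * (p : ℂ) ^ (-(2 * s)))
    (LSeries.term_zero b s) hterm1 (lseries_term_mul_of_coprime hbmul) hrec hs.norm

/-- Let `χ` be a Dirichlet character mod `N` and `b : ℕ → ℂ` satisfy the Hecke relations:
`b 1 = 1`, `b` is multiplicative on coprime arguments, and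
`b (p^r) * b p = b (p^(r+1)) + χ p * p^(k-1) * b (p^(r-1))` for every prime `p` and `r ≥ 1`.
If `∑_{n ≥ 1} |b n * n^(-s)|` converges, then the Dirichlet series `∑_{n ≥ 1} b n * n^(-s)`
equals the (convergent) Euler product
`∏_p (1 - b p * p^(-s) + χ p * p^(k-1-2s))⁻¹` over all primes `p`. -/
theorem dirichlet_series_euler_product
    (N k : ℕ) (hN : 1 ≤ N) (hk : 1 ≤ k) (χ : DirichletCharacter ℂ N)
    (b : ℕ → ℂ) (hb1 : b 1 = 1)
    (hbmul : ∀ m n : ℕ, Nat.Coprime m n → b (m * n) = b m * b n)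
    (hbrec : ∀ p : ℕ, p.Prime → ∀ r : ℕ, 1 ≤ r →
      b (p ^ r) * b p =
        b (p ^ (r + 1)) + χ (p : ZMod N) * (p : ℂ) ^ (k - 1) * b (p ^ (r - 1)))
    (s : ℂ)
    (hsum : Summable fun n : ℕ => ‖b (n + 1) * (((n : ℂ) + 1) ^ (-s))‖) :
    HasProd (fun p : Nat.Primes =>
        (1 - b p * ((p : ℕ) : ℂ) ^ (-s) +
          χ ((p : ℕ) : ZMod N) * ((p : ℕ) : ℂ) ^ ((k : ℂ) - 1 - 2 * s))⁻¹)
      (∑' n : ℕ, b (n + 1) * (((n : ℂ) + 1) ^ (-s))) := by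
  simp only [fun p : Nat.Primes ↦ cpow_natCast_sub_one_sub
    (Nat.cast_ne_zero.2 p.2.ne_zero) hk (2 * s), ← mul_assoc, ← lseries_eq_tsum_succ]
  exact dirichlet_series_euler_product_general (c := fun p ↦ χ p * p ^ (k - 1)) hb1 hbmul
    (fun p hp r ↦ hbrec p hp (r + 1) r.succ_pos) (lseriesSummable_iff_summable_norm_succ.2 hsum)
end

section
/- Let ψ ∈ ℂ and let F_ψ ∈ ℂ[x_0,…,x_4] be the Dwork quintic F_ψ = x_0^5 + x_1^5 + x_2^5 + x_3^5 + x_4^5 − 5ψ·x_0x_1x_2x_3x_4. Then the origin is the only common zero in ℂ^5 of the five partial derivatives ∂F_ψ/∂x_i = 5x_i^4 − 5ψ·∏_{j≠i} x_j (i = 0,…,4) if and only if ψ^5 ≠ 1. Equivalently, the projective quintic hypersurface Q(ψ) = {F_ψ = 0} ⊂ P^4 is smooth if and only if ψ^5 ≠ 1. -/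
/-!
Write `n` for the number of variables and `P = ∏ x_j`. Multiplying the `i`-th critical equation
`x_i ^ (n - 1) = ψ ∏_{j ≠ i} x_j` by `x_i` gives `x_i ^ n = ψ P` for every `i`, and the product of
these equations is `P ^ n = ψ ^ n P ^ n`. So if `ψ ^ n ≠ 1` then `P = 0`, and every `x_i` vanishes.
If `ψ ^ n = 1`, the point with one coordinate `ψ⁻¹` and all others `1` is critical: its coordinates
are `n`-th roots of unity and `ψ P = 1`.
-/

open Finset

section

variable {ι : Type*} [Fintype ι]

theorem pow_card_eq_mul_prod_of_pow_card_sub_one_eq [DecidableEq ι] {M : Type*} [CommMonoid M]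
    {ψ : M} {x : ι → M} {i : ι}
    (h : x i ^ (Fintype.card ι - 1) = ψ * ∏ j ∈ univ.erase i, x j) :
    x i ^ Fintype.card ι = ψ * ∏ j, x j := by
  have : Nonempty ι := ⟨i⟩
  calc x i ^ Fintype.card ι
      = x i * x i ^ (Fintype.card ι - 1) := (mul_pow_sub_one Fintype.card_ne_zero _).symm
    _ = x i * (ψ * ∏ j ∈ univ.erase i, x j) := by rw [h]
    _ = ψ * ∏ j, x j := by rw [mul_left_comm, mul_prod_erase univ x (mem_univ i)]

theorem eq_zero_of_forall_pow_card_eq_mul_prod {M₀ : Type*} [CommMonoidWithZero M₀]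
    [IsCancelMulZero M₀] {ψ : M₀} (hψ : ψ ^ Fintype.card ι ≠ 1) {x : ι → M₀}
    (h : ∀ i, x i ^ Fintype.card ι = ψ * ∏ j, x j) : x = 0 := by
  have prod_pow : ψ ^ Fintype.card ι * (∏ j, x j) ^ Fintype.card ι =
      (∏ j, x j) ^ Fintype.card ι := by
    calc ψ ^ Fintype.card ι * (∏ j, x j) ^ Fintype.card ι
        = ∏ _i : ι, ψ * ∏ j, x j := by rw [← mul_pow, prod_const, card_univ]
      _ = ∏ i, x i ^ Fintype.card ι := by simp only [h]
      _ = (∏ j, x j) ^ Fintype.card ι := Finset.prod_pow _ _ _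
  have prod_eq_zero : ∏ j, x j = 0 := by
    by_contra hP
    exact hψ ((mul_eq_right₀ (pow_ne_zero _ hP)).mp prod_pow)
  funext i
  exact eq_zero_of_pow_eq_zero (by rw [h i, prod_eq_zero, mul_zero])

theorem exists_forall_pow_card_sub_one_eq_mul_prod_erase [DecidableEq ι] [Nonempty ι]
    {G : Type*} [CommGroup G] {ψ : G} (hψ : ψ ^ Fintype.card ι = 1) :
    ∃ x : ι → G, ∀ i, x i ^ (Fintype.card ι - 1) = ψ * ∏ j ∈ univ.erase i, x j := by
  obtain ⟨i₀⟩ := ‹Nonempty ι›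
  let x : ι → G := Pi.mulSingle i₀ ψ⁻¹
  have pow_card (i : ι) : x i ^ Fintype.card ι = 1 := by
    rw [← Pi.pow_apply, ← Pi.mulSingle_pow, inv_pow, hψ, inv_one, Pi.mulSingle_one, Pi.one_apply]
  have mul_prod : ψ * ∏ j, x j = 1 := by
    rw [Fintype.prod_pi_mulSingle', mul_inv_cancel]
  refine ⟨x, fun i ↦ mul_left_cancel (a := x i) ?_⟩
  calc x i * x i ^ (Fintype.card ι - 1)
      = 1 := by rw [mul_pow_sub_one Fintype.card_ne_zero, pow_card]
    _ = x i * (ψ * ∏ j ∈ univ.erase i, x j) := by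
      rw [mul_left_comm, mul_prod_erase univ x (mem_univ i), mul_prod]

theorem dwork_quintic_smooth_iff_general [DecidableEq ι] {R : Type*} [CommRing R] [IsDomain R]
    (hn : (Fintype.card ι : R) ≠ 0) (ψ : R) :
    (∀ x : ι → R, (∀ i, Fintype.card ι * x i ^ (Fintype.card ι - 1) -
        Fintype.card ι * ψ * ∏ j ∈ univ.erase i, x j = 0) → x = 0)
      ↔ ψ ^ Fintype.card ι ≠ 1 := by
  have card_ne_zero : Fintype.card ι ≠ 0 := fun h ↦ hn (by rw [h, Nat.cast_zero])
  have : Nonempty ι := Fintype.card_pos_iff.mp (Nat.pos_of_ne_zero card_ne_zero)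
  simp only [mul_assoc, sub_eq_zero, mul_right_inj' hn]
  refine ⟨fun h hψ ↦ ?_, fun hψ x hx ↦ eq_zero_of_forall_pow_card_eq_mul_prod hψ
    fun i ↦ pow_card_eq_mul_prod_of_pow_card_sub_one_eq (hx i)⟩
  obtain ⟨u, rfl⟩ : IsUnit ψ := .of_pow_eq_one hψ card_ne_zero
  obtain ⟨x, hx⟩ := exists_forall_pow_card_sub_one_eq_mul_prod_erase (ι := ι) (ψ := u)
    (Units.ext hψ)
  have x_eq_zero := h (fun i ↦ (x i : R)) fun i ↦ by exact_mod_cast congrArg Units.val (hx i)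
  exact (x (Classical.arbitrary ι)).ne_zero (congrFun x_eq_zero _)

end

/-- For the Dwork quintic `F_ψ = x₀⁵ + ⋯ + x₄⁵ - 5ψ x₀x₁x₂x₃x₄`, the origin is the only
common zero in `ℂ⁵` of the five partial derivatives
`∂F_ψ/∂x_i = 5 x_i⁴ - 5 ψ ∏_{j ≠ i} x_j` if and only if `ψ⁵ ≠ 1`
(equivalently, the projective quintic `{F_ψ = 0} ⊂ ℙ⁴` is smooth iff `ψ⁵ ≠ 1`). -/
theorem dwork_quintic_smooth_iff (ψ : ℂ) :
    (∀ x : Fin 5 → ℂ,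
        (∀ i : Fin 5, 5 * x i ^ 4 - 5 * ψ * ∏ j ∈ Finset.univ.erase i, x j = 0) → x = 0)
      ↔ ψ ^ 5 ≠ 1 := by
  simpa using dwork_quintic_smooth_iff_general (ι := Fin 5) (R := ℂ) (by norm_num) ψ
end
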